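/- arXiv:2105.08558 — 2 statements merged into one kernel-verified Lean document; each statement's English description precedes it below -/
import Mathlib

section
/- Let ℓ > 0 and let γ : ℝ → ℝ³ be a continuously differentiable ℓ-periodic curve. Then γ is D₂-symmetric if and only if the arc α := γ|[0, ℓ/4] satisfies α(0) ∈ ℝe₃, α(ℓ/4) ∈ ℝe₁, α'(0) ∈ span{e₁, e₂}, α'(ℓ/4) ∈ span{e₂, e₃}, and γ coincides with the ℓ-periodic extension of the glued map built from α. -/
/-!
For a D₂-symmetric curve the glued formula is the symmetry relation itself, read at `t` reduced
modulo `ℓ`. The endpoint conditions express that `t = 0` and `t = ℓ/4` are fixed (modulo `ℓ`) by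
`ψ₃` and `ψ₁`: the point `γ 0` is fixed by `R₃` and `γ (ℓ/4)` by `R₁`, while the third coordinate
of `γ` is even about `0` and the first is even about `ℓ/4`, so their derivatives vanish there
(`deriv_apply_eq_zero_of_even`).

Conversely, the glued formula gives `γ(ℓ/2 - s) = R₁ γ(s)`, `γ(ℓ/2 + s) = R₂ γ(s)` and
`γ(ℓ - s) = R₃ γ(s)` on half-open ranges of `s`; the conditions `γ 0 ∈ ℝe₃` and `γ (ℓ/4) ∈ ℝe₁`
extend all three to the closed interval `[0, ℓ/4]` (`reflect_of_glue`). Modulo `ℓ` every parameter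
is one of `s`, `ℓ/2 - s`, `ℓ/2 + s`, `ℓ - s` with `s ∈ [0, ℓ/4]`, and the group law of
`{1, R₁, R₂, R₃}` then yields the symmetry relations at all parameters.
-/

noncomputable section

open Real Set

/-- Euclidean three-space. -/
abbrev E3 : Type := EuclideanSpace ℝ (Fin 3)

/-- The vector (a,b,c) ∈ ℝ³ (with the Euclidean norm). -/
def vec3 (a b c : ℝ) : E3 := (WithLp.equiv 2 (Fin 3 → ℝ)).symm ![a, b, c]

/-- The standard basis vectors. -/
def e1 : E3 := vec3 1 0 0
def e2 : E3 := vec3 0 1 0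
def e3 : E3 := vec3 0 0 1

/-- The rotations `R₁, R₂, R₃` by angle π about the coordinate axes `ℝe₁, ℝe₂, ℝe₃`
(indexed by `0, 1, 2 : Fin 3`). -/
def Rot : Fin 3 → E3 → E3 :=
  ![fun x => vec3 (x 0) (-x 1) (-x 2),
    fun x => vec3 (-x 0) (x 1) (-x 2),
    fun x => vec3 (-x 0) (-x 1) (x 2)]

/-- The dihedral parameter transformations `ψ₁^ℓ(t) = ℓ/2 - t`, `ψ₂^ℓ(t) = t - ℓ/2`,
`ψ₃^ℓ(t) = ℓ - t` (indexed by `0, 1, 2 : Fin 3`). -/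
def psi (ℓ : ℝ) : Fin 3 → ℝ → ℝ :=
  ![fun t => ℓ / 2 - t, fun t => t - ℓ / 2, fun t => ℓ - t]

/-- An `ℓ`-periodic curve `γ : ℝ → ℝ³` is D₂-symmetric if `Rᵢ(γ(ψᵢ^ℓ(t))) = γ(t)`
for all `t ∈ ℝ` and `i = 1,2,3`. -/
def DihedralSymmetric (ℓ : ℝ) (γ : ℝ → E3) : Prop :=
  ∀ i : Fin 3, ∀ t : ℝ, Rot i (γ (psi ℓ i t)) = γ t

/-- The `ℓ`-periodic extension of the glued map built from a generating arc `α`: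
`g(t) = α(t)` on `[0, ℓ/4)`, `g(t) = Rᵢ(α(ψᵢ^ℓ(t)))` on `[iℓ/4, (i+1)ℓ/4)` for `i = 1,2,3`,
extended `ℓ`-periodically. -/
def glue (ℓ : ℝ) (α : ℝ → E3) (t : ℝ) : E3 :=
  let s := t - ℓ * (⌊t / ℓ⌋ : ℝ)
  if s < ℓ / 4 then α s
  else if s < ℓ / 2 then Rot 0 (α (psi ℓ 0 s))
  else if s < 3 * ℓ / 4 then Rot 1 (α (psi ℓ 1 s))
  else Rot 2 (α (psi ℓ 2 s))

lemma e3_ext {x y : E3} (h0 : x 0 = y 0) (h1 : x 1 = y 1) (h2 : x 2 = y 2) : x = y := by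
  ext i
  fin_cases i <;> assumption

@[simp] lemma vec3_apply_zero (a b c : ℝ) : vec3 a b c 0 = a := rfl
@[simp] lemma vec3_apply_one (a b c : ℝ) : vec3 a b c 1 = b := rfl
@[simp] lemma vec3_apply_two (a b c : ℝ) : vec3 a b c 2 = c := rfl

lemma rot_zero (x : E3) : Rot 0 x = vec3 (x 0) (-x 1) (-x 2) := rfl
lemma rot_one (x : E3) : Rot 1 x = vec3 (-x 0) (x 1) (-x 2) := rfl
lemma rot_two (x : E3) : Rot 2 x = vec3 (-x 0) (-x 1) (x 2) := rfl

lemma psi_zero (ℓ t : ℝ) : psi ℓ 0 t = ℓ / 2 - t := rfl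
lemma psi_one (ℓ t : ℝ) : psi ℓ 1 t = t - ℓ / 2 := rfl
lemma psi_two (ℓ t : ℝ) : psi ℓ 2 t = ℓ - t := rfl

lemma rot_rot_self (i : Fin 3) (x : E3) : Rot i (Rot i x) = x := by
  fin_cases i <;> apply e3_ext <;> simp [rot_zero, rot_one, rot_two]

lemma rot_zero_rot_one (x : E3) : Rot 0 (Rot 1 x) = Rot 2 x := by
  apply e3_ext <;> simp [rot_zero, rot_one, rot_two]

lemma rot_zero_rot_two (x : E3) : Rot 0 (Rot 2 x) = Rot 1 x := by
  apply e3_ext <;> simp [rot_zero, rot_one, rot_two]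

lemma rot_one_rot_zero (x : E3) : Rot 1 (Rot 0 x) = Rot 2 x := by
  apply e3_ext <;> simp [rot_zero, rot_one, rot_two]

lemma rot_one_rot_two (x : E3) : Rot 1 (Rot 2 x) = Rot 0 x := by
  apply e3_ext <;> simp [rot_zero, rot_one, rot_two]

lemma rot_two_rot_one (x : E3) : Rot 2 (Rot 1 x) = Rot 0 x := by
  apply e3_ext <;> simp [rot_zero, rot_one, rot_two]

lemma mem_span_e1_e2 {x : E3} (h : x 2 = 0) : x ∈ Submodule.span ℝ ({e1, e2} : Set E3) := by
  rw [Submodule.mem_span_pair]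
  refine ⟨x 0, x 1, ?_⟩
  apply e3_ext <;> simp [e1, e2, h]

lemma mem_span_e2_e3 {x : E3} (h : x 0 = 0) : x ∈ Submodule.span ℝ ({e2, e3} : Set E3) := by
  rw [Submodule.mem_span_pair]
  refine ⟨x 1, x 2, ?_⟩
  apply e3_ext <;> simp [e2, e3, h]

/-- A coordinate of a curve that is even about `a` has zero derivative at `a`. -/
lemma deriv_apply_eq_zero_of_even {γ : ℝ → E3} (hγ : Differentiable ℝ γ) (i : Fin 3) (a : ℝ)
    (h : ∀ t, γ (2 * a - t) i = γ t i) : deriv γ a i = 0 := by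
  have hd : HasDerivAt (fun t => γ t i) (deriv γ a i) a :=
    (EuclideanSpace.proj i : E3 →L[ℝ] ℝ).hasFDerivAt.comp_hasDerivAt a
      (hγ a).hasDerivAt
  have hr := deriv_comp_const_sub (f := fun t => γ t i) (2 * a) a
  simp only [h] at hr
  rw [show 2 * a - a = a by ring, hd.deriv] at hr
  linarith

/-- The gluing formula, together with the positions of the two endpoints of the arc, gives the
reflection relations on the closed interval `[0, ℓ/4]`. -/
lemma reflect_of_glue {ℓ : ℝ} (hℓ : 0 < ℓ) {γ : ℝ → E3} (hper : ∀ t, γ (t + ℓ) = γ t)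
    {c d : ℝ} (hc : γ 0 = c • e3) (hd : γ (ℓ / 4) = d • e1) (hg : ∀ t, γ t = glue ℓ γ t)
    {s : ℝ} (h0 : 0 ≤ s) (h1 : s ≤ ℓ / 4) :
    γ (ℓ / 2 - s) = Rot 0 (γ s) ∧ γ (ℓ / 2 + s) = Rot 1 (γ s) ∧ γ (ℓ - s) = Rot 2 (γ s) := by
  have hfl : ∀ t, 0 ≤ t → t < ℓ → t - ℓ * (⌊t / ℓ⌋ : ℝ) = t := by
    intro t ht ht'
    have : ⌊t / ℓ⌋ = 0 := Int.floor_eq_zero_iff.2 ⟨by positivity, (div_lt_one hℓ).2 ht'⟩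
    simp [this]
  -- On the half-open ranges, the three relations are branches of the definition of `glue`.
  have hA : ∀ s, 0 < s → s ≤ ℓ / 4 → γ (ℓ / 2 - s) = Rot 0 (γ s) := by
    intro s h0 h1
    rw [hg (ℓ / 2 - s), glue]
    simp only [hfl (ℓ / 2 - s) (by linarith) (by linarith)]
    rw [if_neg (by linarith), if_pos (by linarith), psi_zero, sub_sub_cancel]
  have hB : ∀ s, 0 ≤ s → s < ℓ / 4 → γ (ℓ / 2 + s) = Rot 1 (γ s) := by
    intro s h0 h1
    rw [hg (ℓ / 2 + s), glue]
    simp only [hfl (ℓ / 2 + s) (by linarith) (by linarith)]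
    rw [if_neg (by linarith), if_neg (by linarith), if_pos (by linarith), psi_one,
      add_sub_cancel_left]
  have hC : ∀ s, 0 < s → s ≤ ℓ / 4 → γ (ℓ - s) = Rot 2 (γ s) := by
    intro s h0 h1
    rw [hg (ℓ - s), glue]
    simp only [hfl (ℓ - s) (by linarith) (by linarith)]
    rw [if_neg (by linarith), if_neg (by linarith), if_neg (by linarith), psi_two,
      sub_sub_cancel]
  -- On the axis `ℝe₃` one has `R₁ = R₂` and `R₃ = 1`; on the axis `ℝe₁` one has `R₂ = R₃`.
  have h01 : Rot 0 (γ 0) = Rot 1 (γ 0) := by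
    rw [hc]; apply e3_ext <;> simp [rot_zero, rot_one, e3]
  have h2 : Rot 2 (γ 0) = γ 0 := by
    rw [hc]; apply e3_ext <;> simp [rot_two, e3]
  have h12 : Rot 1 (γ (ℓ / 4)) = Rot 2 (γ (ℓ / 4)) := by
    rw [hd]; apply e3_ext <;> simp [rot_one, rot_two, e1]
  refine ⟨?_, ?_, ?_⟩
  · rcases h0.eq_or_lt with rfl | h
    · rw [h01, ← hB 0 le_rfl (by linarith), sub_zero, add_zero]
    · exact hA s h h1
  · rcases h1.eq_or_lt with rfl | h
    · rw [h12, ← hC (ℓ / 4) (by linarith) le_rfl]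
      congr 1; ring
    · exact hB s h0 h
  · rcases h0.eq_or_lt with rfl | h
    · rw [h2, sub_zero, ← hper 0, zero_add]
    · exact hC s h h1

/-- The four quarters of a period are the images of `[0, ℓ/4]` under the dihedral parameter
transformations. -/
lemma exists_quarter {ℓ r : ℝ} (h0 : 0 ≤ r) (h1 : r < ℓ) :
    ∃ s, 0 ≤ s ∧ s ≤ ℓ / 4 ∧ (r = s ∨ r = ℓ / 2 - s ∨ r = ℓ / 2 + s ∨ r = ℓ - s) := by
  rcases le_total r (ℓ / 2) with h | h
  · rcases le_total r (ℓ / 4) with h' | h'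
    · exact ⟨r, h0, h', Or.inl rfl⟩
    · exact ⟨ℓ / 2 - r, by linarith, by linarith, Or.inr (Or.inl (by ring))⟩
  · rcases le_total r (3 * ℓ / 4) with h' | h'
    · exact ⟨r - ℓ / 2, by linarith, by linarith, Or.inr (Or.inr (Or.inl (by ring)))⟩
    · exact ⟨ℓ - r, by linarith, by linarith, Or.inr (Or.inr (Or.inr (by ring)))⟩

/-- An identity between two `ℓ`-periodic curves need only be checked on `[0, ℓ)`. -/
lemma eq_of_periodic {ℓ : ℝ} (hℓ : 0 < ℓ) {f g : ℝ → E3} (hf : ∀ t, f (t + ℓ) = f t)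
    (hg : ∀ t, g (t + ℓ) = g t) (h : ∀ r, 0 ≤ r → r < ℓ → f r = g r) (t : ℝ) : f t = g t := by
  have hp : Function.Periodic (fun t => (f t, g t)) ℓ := fun t => by simp [hf, hg]
  obtain ⟨r, ⟨h0, h1⟩, hr⟩ := hp.exists_mem_Ico₀ hℓ t
  rw [Prod.mk.injEq] at hr
  rw [hr.1, hr.2, h r h0 h1]

/-- A continuously differentiable `ℓ`-periodic curve `γ` is D₂-symmetric
if and only if the arc `α := γ|[0, ℓ/4]` satisfies `α(0) ∈ ℝe₃`, `α(ℓ/4) ∈ ℝe₁`,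
`α'(0) ∈ span{e₁, e₂}`, `α'(ℓ/4) ∈ span{e₂, e₃}`, and `γ` coincides with the `ℓ`-periodic
extension of the glued map built from `α`. -/
theorem dihedralSymmetric_iff_glued_C1 (ℓ : ℝ) (hℓ : 0 < ℓ) (γ : ℝ → E3)
    (hγ : ContDiff ℝ 1 γ) (hper : ∀ t, γ (t + ℓ) = γ t) :
    DihedralSymmetric ℓ γ ↔
      ((∃ c : ℝ, γ 0 = c • e3) ∧ (∃ c : ℝ, γ (ℓ / 4) = c • e1) ∧
        deriv γ 0 ∈ Submodule.span ℝ ({e1, e2} : Set E3) ∧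
        deriv γ (ℓ / 4) ∈ Submodule.span ℝ ({e2, e3} : Set E3) ∧
        ∀ t, γ t = glue ℓ γ t) := by
  constructor
  · intro h
    have hdiff : Differentiable ℝ γ := hγ.differentiable one_ne_zero
    have hR0 : ∀ t, Rot 0 (γ (ℓ / 2 - t)) = γ t := h 0
    have hR2 : ∀ t, Rot 2 (γ (-t)) = γ t := fun t => by
      rw [← hper (-t), neg_add_eq_sub]; exact h 2 t
    refine ⟨⟨γ 0 2, ?_⟩, ⟨γ (ℓ / 4) 0, ?_⟩, mem_span_e1_e2 ?_, mem_span_e2_e3 ?_, ?_⟩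
    · have h0 := hR2 0
      rw [neg_zero] at h0
      have ha := congrArg (fun x : E3 => x 0) h0
      have hb := congrArg (fun x : E3 => x 1) h0
      simp only [rot_two, vec3_apply_zero, vec3_apply_one] at ha hb
      apply e3_ext <;> simp [e3] <;> linarith
    · have h0 := hR0 (ℓ / 4)
      rw [show ℓ / 2 - ℓ / 4 = ℓ / 4 by ring] at h0
      have ha := congrArg (fun x : E3 => x 1) h0
      have hb := congrArg (fun x : E3 => x 2) h0
      simp only [rot_zero, vec3_apply_two, vec3_apply_one] at ha hb
      apply e3_ext <;> simp [e1] <;> linarith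
    · apply deriv_apply_eq_zero_of_even hdiff
      intro t
      rw [← hR2 t, mul_zero, zero_sub, rot_two, vec3_apply_two]
    · apply deriv_apply_eq_zero_of_even hdiff
      intro t
      rw [← hR0 t, show 2 * (ℓ / 4) - t = ℓ / 2 - t by ring, rot_zero, vec3_apply_zero]
    · intro t
      have hs : γ (t - ℓ * (⌊t / ℓ⌋ : ℝ)) = γ t := by
        rw [mul_comm]
        exact Function.Periodic.sub_int_mul_eq hper _
      simp only [glue, h 0 _, h 1 _, h 2 _, hs, ite_self]
  · rintro ⟨⟨c, hc⟩, ⟨d, hd⟩, -, -, hg⟩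
    have hper' : ∀ t, γ (t - ℓ) = γ t := fun t => by rw [← hper (t - ℓ), sub_add_cancel]
    have key := fun s h0 h1 => reflect_of_glue hℓ hper hc hd hg (s := s) h0 h1
    have hR0 : ∀ t, Rot 0 (γ (ℓ / 2 - t)) = γ t := by
      refine eq_of_periodic hℓ (fun t => ?_) hper fun r h0 h1 => ?_
      · rw [← sub_sub, hper']
      obtain ⟨s, hs0, hs1, hr⟩ := exists_quarter h0 h1
      obtain ⟨hA, hB, hC⟩ := key s hs0 hs1
      rcases hr with rfl | rfl | rfl | rfl
      · rw [hA, rot_rot_self]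
      · rw [sub_sub_cancel, hA]
      · rw [← hper, show ℓ / 2 - (ℓ / 2 + s) + ℓ = ℓ - s by ring, hB, hC, rot_zero_rot_two]
      · rw [← hper, show ℓ / 2 - (ℓ - s) + ℓ = ℓ / 2 + s by ring, hB, hC, rot_zero_rot_one]
    have hR1 : ∀ t, Rot 1 (γ (t - ℓ / 2)) = γ t := by
      refine eq_of_periodic hℓ (fun t => ?_) hper fun r h0 h1 => ?_
      · rw [add_sub_right_comm, hper]
      obtain ⟨s, hs0, hs1, hr⟩ := exists_quarter h0 h1
      obtain ⟨hA, hB, hC⟩ := key s hs0 hs1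
      rcases hr with rfl | rfl | rfl | rfl
      · rw [← hper, show r - ℓ / 2 + ℓ = ℓ / 2 + r by ring, hB, rot_rot_self]
      · rw [← hper, show ℓ / 2 - s - ℓ / 2 + ℓ = ℓ - s by ring, hA, hC, rot_one_rot_two]
      · rw [add_sub_cancel_left, hB]
      · rw [show ℓ - s - ℓ / 2 = ℓ / 2 - s by ring, hA, hC, rot_one_rot_zero]
    -- The third symmetry is the composite of the first two.
    have hR2 : ∀ t, Rot 2 (γ (ℓ - t)) = γ t := fun t => by
      rw [← hR1 (ℓ - t), rot_two_rot_one, show ℓ - t - ℓ / 2 = ℓ / 2 - t by ring, hR0]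
    intro i
    fin_cases i
    · exact hR0
    · exact hR1
    · exact hR2
end
end

section
/- Strong W^{2,2}-convergence of the generating arcs of the D₂-symmetric (2,b)-torus knots to the generating arc of tpc[π]: let b ≥ 3 be odd, and for ε ∈ (0, 1/(8(b+1))) set r = r(ε) := (1/4 − (b+1)ε)/π and define α^ε : [0, 1/4] → ℝ³ by α^ε(t) = h^ε(t) := (ε²·(−1)^{(b−1)/2}·sin(π·φ(t/ε)), t, ε²·cos(π·φ(t/ε))) for t ∈ [0, (b+1)ε/2], α^ε(t) = (ε² + r − r·cos((t − (b+1)ε/2)/r), (b+1)ε/2 + r·sin((t − (b+1)ε/2)/r), 0) for t ∈ ((b+1)ε/2, 1/4 − (b+1)ε/2], and α^ε(t) = (ε² + 2r, 1/4 − t, 0) for t ∈ (1/4 − (b+1)ε/2, 1/4], where φ(t) = t on [0,(b−1)/2], φ(t) = b/2 − (1/2)(t−(b+1)/2)² on [(b−1)/2,(b+1)/2], φ(t) = b/2 for t ≥ (b+1)/2. Let α₂(t) = (1/(4π))·(1 − cos(4πt), sin(4πt), 0). Then there exists a constant C ≥ 1, independent of ε, such that for all ε ∈ (0, 1/(8(b+1))):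 (∫₀^{1/4} ‖(α^ε)''(t) − α₂''(t)‖² dt)^{1/2} ≤ C·√ε, (∫₀^{1/4} ‖(α^ε)'(t) − α₂'(t)‖² dt)^{1/2} ≤ C·√ε, and sup_{t ∈ [0,1/4]} ‖α^ε(t) − α₂(t)‖ ≤ C·√ε; in particular α^ε → α₂ in the W^{2,2}-sense as ε → 0. -/
/-!
On the helical part and on the segment, two end intervals of total length `(b+1)ε`, the first
and second derivatives of `α^ε` are bounded independently of `ε`: the helix radius `ε²` beats the
factor `1/ε²` which the phase `φ(t/ε)` contributes when differentiated twice
(`helix_deriv_bound`). On the semicircle, radius and angle differ from those of the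
limit arc by `O(ε)` (`radius_angle_bounds`), hence so do the curves and their derivatives.
The squared `L²`-norms of the differences are therefore at most `O(1) · O(ε) + O(ε²) = O(ε)`
(`sqrt_integral_le`). The sup-norm is `O(ε)`, because on the short end intervals both arcs stay
within `O(ε)` of the same point (`sub_bound`).

The integrals only see `α^ε` away from the finitely many break points, where derivatives are
computed locally (`deriv_of_eqOn_Ioo`).
-/

noncomputable section

open Real Set

/-- The parameter transformation `φ` (for an odd integer `b ≥ 3`). -/
def phi (b : ℕ) (t : ℝ) : ℝ :=
  if t ≤ ((b : ℝ) - 1) / 2 then t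
  else if t ≤ ((b : ℝ) + 1) / 2 then (b : ℝ) / 2 - (1 / 2) * (t - ((b : ℝ) + 1) / 2) ^ 2
  else (b : ℝ) / 2

/-- The helical part `h^ε` of the generating arc of the D₂-symmetric `(2,b)`-torus knots
(with `ρ = ε²`). -/
def hel (b : ℕ) (ε : ℝ) (t : ℝ) : E3 :=
  vec3 (ε ^ 2 * (-1 : ℝ) ^ ((b - 1) / 2) * Real.sin (π * phi b (t / ε)))
    t
    (ε ^ 2 * Real.cos (π * phi b (t / ε)))

/-- The generating arc `α^ε` of the D₂-symmetric `(2,b)`-torus knots (for `ℓ = 1` and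
`ρ = ε²`): a helical part, followed by a semicircle of radius
`r = r(ε) = (1/4 - (b+1)ε)/π`, followed by a straight segment. -/
def alphaEps (b : ℕ) (ε : ℝ) (t : ℝ) : E3 :=
  let r : ℝ := (1 / 4 - ((b : ℝ) + 1) * ε) / π
  if t ≤ ((b : ℝ) + 1) * ε / 2 then hel b ε t
  else if t ≤ 1 / 4 - ((b : ℝ) + 1) * ε / 2 then
    vec3 (ε ^ 2 + r - r * Real.cos ((t - ((b : ℝ) + 1) * ε / 2) / r))
      (((b : ℝ) + 1) * ε / 2 + r * Real.sin ((t - ((b : ℝ) + 1) * ε / 2) / r))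
      0
  else vec3 (ε ^ 2 + 2 * r) (1 / 4 - t) 0

/-- The generating arc `α₂` of the tangential pair of co-planar circles `tpc[π]`. -/
def alphaTwo (t : ℝ) : E3 :=
  (1 / (4 * π)) • vec3 (1 - Real.cos (4 * π * t)) (Real.sin (4 * π * t)) 0

/-! ### Calculus for curves given by their coordinates -/

lemma vec3_eq (a b c : ℝ) : vec3 a b c = a • e1 + b • e2 + c • e3 := by
  ext i
  fin_cases i <;> simp [vec3, e1, e2, e3]

lemma vec3_sub (a b c a' b' c' : ℝ) :
    vec3 a b c - vec3 a' b' c' = vec3 (a - a') (b - b') (c - c') := by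
  ext i
  fin_cases i <;> simp [vec3]

lemma norm_vec3_le (a b c : ℝ) : ‖vec3 a b c‖ ≤ |a| + |b| + |c| := by
  have h : ‖vec3 a b c‖ = √(a ^ 2 + b ^ 2 + c ^ 2) := by
    simp [EuclideanSpace.norm_eq, Fin.sum_univ_three, vec3]
  rw [h]
  refine Real.sqrt_le_iff.2 ⟨by positivity, ?_⟩
  nlinarith [abs_nonneg a, abs_nonneg b, abs_nonneg c, sq_abs a, sq_abs b, sq_abs c,
    mul_nonneg (abs_nonneg a) (abs_nonneg b), mul_nonneg (abs_nonneg a) (abs_nonneg c),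
    mul_nonneg (abs_nonneg b) (abs_nonneg c)]

lemma hasDerivAt_vec3 {f g h : ℝ → ℝ} {f' g' h' t : ℝ} (hf : HasDerivAt f f' t)
    (hg : HasDerivAt g g' t) (hh : HasDerivAt h h' t) :
    HasDerivAt (fun s => vec3 (f s) (g s) (h s)) (vec3 f' g' h') t := by
  simp only [vec3_eq]
  exact ((hf.smul_const e1).add (hg.smul_const e2)).add (hh.smul_const e3)

/-- Derivatives are local: a curve that agrees with a smooth one on an open interval has the
same first and second derivatives there, whatever happens at the ends of the interval. -/
lemma deriv_of_eqOn_Ioo {F : ℝ → E3} {f f' f'' g g' g'' h h' h'' : ℝ → ℝ} {p q : ℝ}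
    (hF : ∀ t ∈ Ioo p q, F t = vec3 (f t) (g t) (h t))
    (hf : ∀ t, HasDerivAt f (f' t) t) (hf' : ∀ t, HasDerivAt f' (f'' t) t)
    (hg : ∀ t, HasDerivAt g (g' t) t) (hg' : ∀ t, HasDerivAt g' (g'' t) t)
    (hh : ∀ t, HasDerivAt h (h' t) t) (hh' : ∀ t, HasDerivAt h' (h'' t) t)
    {t : ℝ} (ht : t ∈ Ioo p q) :
    deriv F t = vec3 (f' t) (g' t) (h' t) ∧
      deriv (deriv F) t = vec3 (f'' t) (g'' t) (h'' t) := by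
  have h1 : ∀ s ∈ Ioo p q, deriv F s = vec3 (f' s) (g' s) (h' s) := by
    intro s hs
    have he : F =ᶠ[nhds s] fun s => vec3 (f s) (g s) (h s) :=
      Filter.eventually_of_mem (isOpen_Ioo.mem_nhds hs) hF
    rw [he.deriv_eq]
    exact (hasDerivAt_vec3 (hf s) (hg s) (hh s)).deriv
  refine ⟨h1 t ht, ?_⟩
  have he : deriv F =ᶠ[nhds t] fun s => vec3 (f' s) (g' s) (h' s) :=
    Filter.eventually_of_mem (isOpen_Ioo.mem_nhds ht) h1
  rw [he.deriv_eq]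
  exact (hasDerivAt_vec3 (hf' t) (hg' t) (hh' t)).deriv

/-! ### The limit arc -/

lemma alphaTwo_eq (t : ℝ) :
    alphaTwo t = vec3 (1 / (4 * π) * (1 - cos (4 * π * t))) (1 / (4 * π) * sin (4 * π * t)) 0 := by
  ext i
  fin_cases i <;> simp [alphaTwo, vec3]

lemma hasDerivAt_sin_mul (c t : ℝ) : HasDerivAt (fun s => sin (c * s)) (c * cos (c * t)) t := by
  simpa [mul_comm] using ((hasDerivAt_id t).const_mul c).sin

lemma hasDerivAt_cos_mul (c t : ℝ) : HasDerivAt (fun s => cos (c * s)) (-c * sin (c * t)) t := by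
  simpa [mul_comm] using ((hasDerivAt_id t).const_mul c).cos

lemma deriv_alphaTwo (t : ℝ) :
    deriv alphaTwo t = vec3 (sin (4 * π * t)) (cos (4 * π * t)) 0 ∧
      deriv (deriv alphaTwo) t =
        vec3 (4 * π * cos (4 * π * t)) (-(4 * π) * sin (4 * π * t)) 0 := by
  have hπ := Real.pi_ne_zero
  refine deriv_of_eqOn_Ioo (p := t - 1) (q := t + 1) (f' := fun s => sin (4 * π * s))
    (g' := fun s => cos (4 * π * s)) (h' := fun _ => 0)
    (f'' := fun s => 4 * π * cos (4 * π * s)) (g'' := fun s => -(4 * π) * sin (4 * π * s))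
    (h'' := fun _ => 0)
    (fun s _ => alphaTwo_eq s) ?_ (hasDerivAt_sin_mul _) ?_ (hasDerivAt_cos_mul _)
    (fun s => hasDerivAt_const s 0) (fun s => hasDerivAt_const s 0) ⟨by linarith, by linarith⟩
  · intro s
    refine (((hasDerivAt_cos_mul (4 * π) s).const_sub 1).const_mul (1 / (4 * π))).congr_deriv ?_
    field_simp
  · intro s
    refine ((hasDerivAt_sin_mul (4 * π) s).const_mul (1 / (4 * π))).congr_deriv ?_
    field_simp

/-! ### Pointwise estimates -/

lemma abs_mul_sin_sub_le (p q x y : ℝ) : |p * sin x - q * sin y| ≤ |p - q| + |q| * |x - y| := by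
  have h : p * sin x - q * sin y = (p - q) * sin x + q * (sin x - sin y) := by ring
  rw [h]
  refine (abs_add_le _ _).trans ?_
  rw [abs_mul, abs_mul]
  exact add_le_add (mul_le_of_le_one_right (abs_nonneg _) (abs_sin_le_one x))
    (mul_le_mul_of_nonneg_left (abs_sin_sub_sin_le x y) (abs_nonneg _))

lemma abs_mul_cos_sub_le (p q x y : ℝ) : |p * cos x - q * cos y| ≤ |p - q| + |q| * |x - y| := by
  have h : p * cos x - q * cos y = (p - q) * cos x + q * (cos x - cos y) := by ring
  rw [h]
  refine (abs_add_le _ _).trans ?_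
  rw [abs_mul, abs_mul]
  exact add_le_add (mul_le_of_le_one_right (abs_nonneg _) (abs_cos_le_one x))
    (mul_le_mul_of_nonneg_left (abs_cos_sub_cos_le x y) (abs_nonneg _))

lemma norm_deriv_alphaTwo_le (t : ℝ) :
    ‖deriv alphaTwo t‖ ≤ 2 ∧ ‖deriv (deriv alphaTwo) t‖ ≤ 32 := by
  rw [(deriv_alphaTwo t).1, (deriv_alphaTwo t).2]
  have h1 := abs_sin_le_one (4 * π * t)
  have h2 := abs_cos_le_one (4 * π * t)
  have hπ := Real.pi_pos
  have hπ4 := Real.pi_le_four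
  constructor
  · refine (norm_vec3_le _ _ _).trans ?_
    rw [abs_zero]
    linarith
  · refine (norm_vec3_le _ _ _).trans ?_
    rw [abs_mul (4 * π), abs_mul (-(4 * π)), abs_neg, abs_of_pos (by positivity : 0 < 4 * π), abs_zero]
    nlinarith

/-- The helical strand traversed with an arbitrary phase `P`: rescaling the radius by `ε²`
keeps the second derivative bounded as long as `P' = O(1/ε)` and `P'' = O(1/ε²)`. -/
lemma helix_deriv_bound {F : ℝ → E3} {P P' P'' : ℝ → ℝ} {p q ε s : ℝ} (hε : 0 < ε)
    (hε1 : ε ≤ 1) (hs : |s| = 1)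
    (hF : ∀ t ∈ Ioo p q, F t = vec3 (ε ^ 2 * s * sin (π * P t)) t (ε ^ 2 * cos (π * P t)))
    (hP : ∀ t, HasDerivAt P (P' t) t) (hP' : ∀ t, HasDerivAt P' (P'' t) t)
    {t : ℝ} (ht : t ∈ Ioo p q) (hb' : |ε * P' t| ≤ 1) (hb'' : |ε ^ 2 * P'' t| ≤ 1) :
    ‖deriv F t‖ ≤ 9 ∧ ‖deriv (deriv F) t‖ ≤ 40 := by
  have hπ := Real.pi_pos
  have hπ4 := Real.pi_le_four
  have hsin : ∀ t, HasDerivAt (fun t => sin (π * P t)) (cos (π * P t) * (π * P' t)) t :=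
    fun t => ((hP t).const_mul π).sin
  have hcos : ∀ t, HasDerivAt (fun t => cos (π * P t)) (-sin (π * P t) * (π * P' t)) t :=
    fun t => ((hP t).const_mul π).cos
  have hd := deriv_of_eqOn_Ioo hF
    (fun t => (hsin t).const_mul (ε ^ 2 * s))
    (fun t => ((hcos t).mul ((hP' t).const_mul π)).const_mul (ε ^ 2 * s))
    (fun t => hasDerivAt_id t) (fun t => hasDerivAt_const t 1)
    (fun t => (hcos t).const_mul (ε ^ 2))
    (fun t => ((hsin t).neg.mul ((hP' t).const_mul π)).const_mul (ε ^ 2)) ht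
  rw [hd.1, hd.2]
  have h1 := abs_sin_le_one (π * P t)
  have h2 := abs_cos_le_one (π * P t)
  have hS : ∀ x y : ℝ, |x| ≤ 1 → |y| ≤ 1 → |x * y| ≤ 1 := fun x y hx hy => by
    rw [abs_mul]
    exact mul_le_one₀ hx (abs_nonneg _) hy
  have hε' : |ε| ≤ 1 := by rwa [abs_of_pos hε]
  -- All terms are products of `π`, or `π ^ 2`, with factors of absolute value at most one.
  have hA : ∀ z : ℝ, |z| ≤ 1 → |π * z| ≤ 4 := fun z hz => by
    rw [abs_mul, abs_of_pos hπ]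
    nlinarith [abs_nonneg z]
  have hB : ∀ z : ℝ, |z| ≤ 1 → |π ^ 2 * z| ≤ 16 := fun z hz => by
    rw [abs_mul, abs_of_pos (by positivity)]
    nlinarith [abs_nonneg z]
  have hss : |s| ≤ 1 := hs.le
  have hn : |-sin (π * P t)| ≤ 1 := by rwa [abs_neg]
  have hn' : |-cos (π * P t)| ≤ 1 := by rwa [abs_neg]
  have hp2 := hS _ _ hb' hb'
  constructor
  · refine (norm_vec3_le _ _ _).trans ?_
    have e1 : ε ^ 2 * s * (cos (π * P t) * (π * P' t)) =
        π * (s * (cos (π * P t) * (ε * (ε * P' t)))) := by ring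
    have e2 : ε ^ 2 * (-sin (π * P t) * (π * P' t)) =
        π * (-sin (π * P t) * (ε * (ε * P' t))) := by ring
    rw [e1, e2, abs_one]
    have i1 := hA _ (hS _ _ hss (hS _ _ h2 (hS _ _ hε' hb')))
    have i2 := hA _ (hS _ _ hn (hS _ _ hε' hb'))
    linarith
  · refine (norm_vec3_le _ _ _).trans ?_
    have e1 : ε ^ 2 * s * (-sin (π * P t) * (π * P' t) * (π * P' t) +
        cos (π * P t) * (π * P'' t)) =
        π ^ 2 * (s * (-sin (π * P t) * (ε * P' t * (ε * P' t)))) +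
          π * (s * (cos (π * P t) * (ε ^ 2 * P'' t))) := by ring
    have e2 : ε ^ 2 * (-(cos (π * P t) * (π * P' t)) * (π * P' t) +
        -sin (π * P t) * (π * P'' t)) =
        π ^ 2 * (-cos (π * P t) * (ε * P' t * (ε * P' t))) +
          π * (-sin (π * P t) * (ε ^ 2 * P'' t)) := by ring
    simp only [Pi.neg_apply]
    rw [e1, e2, abs_zero]
    have i1 := hB _ (hS _ _ hss (hS _ _ hn hp2))
    have i2 := hA _ (hS _ _ hss (hS _ _ h2 hb''))
    have i3 := hB _ (hS _ _ hn' hp2)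
    have i4 := hA _ (hS _ _ hn hb'')
    have j1 := abs_add_le (π ^ 2 * (s * (-sin (π * P t) * (ε * P' t * (ε * P' t)))))
      (π * (s * (cos (π * P t) * (ε ^ 2 * P'' t))))
    have j2 := abs_add_le (π ^ 2 * (-cos (π * P t) * (ε * P' t * (ε * P' t))))
      (π * (-sin (π * P t) * (ε ^ 2 * P'' t)))
    linarith

/-- Comparison of the radius `r = (1/4 - δ)/π` and the angle `(t - δ/2)/r` of the semicircle
with the radius `1/(4π)` and the angle `4πt` of the limit arc, where `δ = (b+1)ε`. -/
lemma radius_angle_bounds {δ t : ℝ} (hδ : 0 < δ) (hδ8 : δ < 1 / 8) (ht0 : 0 ≤ t)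
    (ht1 : t ≤ 1 / 4) :
    |1 / ((1 / 4 - δ) / π) - 4 * π| ≤ 128 * δ ∧
      |(t - δ / 2) / ((1 / 4 - δ) / π) - 4 * π * t| ≤ 48 * δ ∧
      |(1 / 4 - δ) / π - 1 / (4 * π)| ≤ δ := by
  have hπ := Real.pi_pos
  have hπ4 := Real.pi_le_four
  have hπ3 := Real.pi_gt_three
  have hd : 0 < 1 / 4 - δ := by linarith
  have hd4 : 1 - 4 * δ ≠ 0 := by linarith
  refine ⟨?_, ?_, ?_⟩
  · have h : 1 / ((1 / 4 - δ) / π) - 4 * π = 4 * π * δ / (1 / 4 - δ) := by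
      field_simp
      ring
    rw [h, abs_of_pos (by positivity), div_le_iff₀ hd]
    nlinarith
  · have h : (t - δ / 2) / ((1 / 4 - δ) / π) - 4 * π * t =
        π * δ * (4 * t - 1 / 2) / (1 / 4 - δ) := by
      rw [div_div_eq_mul_div, div_sub' hd.ne', div_left_inj' hd.ne']
      ring
    rw [h, abs_div, abs_of_pos hd, div_le_iff₀ hd, abs_mul, abs_of_pos (by positivity)]
    have h4 : |4 * t - 1 / 2| ≤ 1 / 2 := abs_le.2 ⟨by linarith, by linarith⟩
    have : π * δ * |4 * t - 1 / 2| ≤ 4 * δ * (1 / 2) := by gcongr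
    nlinarith
  · have h : (1 / 4 - δ) / π - 1 / (4 * π) = -(δ / π) := by
      field_simp
      ring
    rw [h, abs_neg, abs_of_pos (by positivity), div_le_iff₀ hπ]
    nlinarith

/-! ### The three parts of the generating arc -/

lemma alphaEps_of_le {b : ℕ} {ε t : ℝ} (ht : t ≤ ((b : ℝ) + 1) * ε / 2) :
    alphaEps b ε t = hel b ε t := by
  simp only [alphaEps, if_pos ht]

lemma alphaEps_of_mid {b : ℕ} {ε t : ℝ} (ht : ((b : ℝ) + 1) * ε / 2 < t)
    (ht' : t ≤ 1 / 4 - ((b : ℝ) + 1) * ε / 2) :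
    alphaEps b ε t =
      vec3 (ε ^ 2 + (1 / 4 - ((b : ℝ) + 1) * ε) / π - (1 / 4 - ((b : ℝ) + 1) * ε) / π *
          cos ((t - ((b : ℝ) + 1) * ε / 2) / ((1 / 4 - ((b : ℝ) + 1) * ε) / π)))
        (((b : ℝ) + 1) * ε / 2 + (1 / 4 - ((b : ℝ) + 1) * ε) / π *
          sin ((t - ((b : ℝ) + 1) * ε / 2) / ((1 / 4 - ((b : ℝ) + 1) * ε) / π)))
        0 := by
  simp only [alphaEps, if_neg (not_le.2 ht), if_pos ht']

lemma alphaEps_of_gt {b : ℕ} {ε t : ℝ} (hδ : ((b : ℝ) + 1) * ε < 1 / 8)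
    (ht : 1 / 4 - ((b : ℝ) + 1) * ε / 2 < t) :
    alphaEps b ε t = vec3 (ε ^ 2 + 2 * ((1 / 4 - ((b : ℝ) + 1) * ε) / π)) (1 / 4 - t) 0 := by
  have h : ¬ t ≤ ((b : ℝ) + 1) * ε / 2 := by linarith
  simp only [alphaEps, if_neg h, if_neg (not_le.2 ht)]

lemma deriv_bound_helix {b : ℕ} {ε t : ℝ} (hε : 0 < ε) (hε1 : ε ≤ 1)
    (ht : t < ((b : ℝ) + 1) * ε / 2) (hne : t ≠ ((b : ℝ) - 1) * ε / 2) :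
    ‖deriv (alphaEps b ε) t‖ ≤ 9 ∧ ‖deriv (deriv (alphaEps b ε)) t‖ ≤ 40 := by
  have hs : |(-1 : ℝ) ^ ((b - 1) / 2)| = 1 := by simp
  rcases lt_or_gt_of_ne hne with h | h
  · refine helix_deriv_bound (p := t - 1) (q := ((b : ℝ) - 1) * ε / 2) (P := fun t => t / ε)
      (P' := fun _ => 1 / ε) (P'' := fun _ => 0) hε hε1 hs ?_
      (fun s => (hasDerivAt_id s).div_const ε) (fun s => hasDerivAt_const s _)
      ⟨by linarith, h⟩ ?_ (by simp)
    · intro u hu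
      have h1 : u / ε ≤ ((b : ℝ) - 1) / 2 := by
        rw [div_le_iff₀ hε]
        linarith [hu.2]
      rw [alphaEps_of_le (by linarith [hu.2]), hel, phi, if_pos h1]
    · rw [mul_one_div_cancel hε.ne', abs_one]
  · refine helix_deriv_bound (p := ((b : ℝ) - 1) * ε / 2) (q := ((b : ℝ) + 1) * ε / 2)
      (P := fun t => (b : ℝ) / 2 - (1 / 2) * (t / ε - ((b : ℝ) + 1) / 2) ^ 2)
      (P' := fun t => -((t / ε - ((b : ℝ) + 1) / 2) / ε)) (P'' := fun _ => -(1 / ε / ε))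
      hε hε1 hs ?_ ?_ ?_ ⟨h, ht⟩ ?_ ?_
    · intro u hu
      have h1 : ¬ u / ε ≤ ((b : ℝ) - 1) / 2 := by
        rw [div_le_iff₀ hε]
        linarith [hu.1]
      have h2 : u / ε ≤ ((b : ℝ) + 1) / 2 := by
        rw [div_le_iff₀ hε]
        linarith [hu.2]
      rw [alphaEps_of_le hu.2.le, hel, phi, if_neg h1, if_pos h2]
    · intro s
      refine ((((((hasDerivAt_id s).div_const ε).sub_const (((b : ℝ) + 1) / 2)).pow 2).const_mul
        (1 / 2 : ℝ)).const_sub ((b : ℝ) / 2)).congr_deriv ?_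
      simp only [id_eq]
      ring
    · intro s
      exact ((((hasDerivAt_id s).div_const ε).sub_const (((b : ℝ) + 1) / 2)).div_const ε).neg
    · have h1 : ((b : ℝ) - 1) / 2 < t / ε := by
        rw [lt_div_iff₀ hε]
        linarith
      have h2 : t / ε < ((b : ℝ) + 1) / 2 := by
        rw [div_lt_iff₀ hε]
        linarith
      have e : ε * -((t / ε - ((b : ℝ) + 1) / 2) / ε) = -(t / ε - ((b : ℝ) + 1) / 2) := by
        field_simp
      rw [e]
      exact abs_le.2 ⟨by linarith, by linarith⟩
    · have e : ε ^ 2 * -(1 / ε / ε) = -1 := by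
        field_simp
      rw [e]
      simp

lemma deriv_bound_segment {b : ℕ} {ε t : ℝ} (hδ : ((b : ℝ) + 1) * ε < 1 / 8)
    (ht : 1 / 4 - ((b : ℝ) + 1) * ε / 2 < t) :
    ‖deriv (alphaEps b ε) t‖ ≤ 9 ∧ ‖deriv (deriv (alphaEps b ε)) t‖ ≤ 40 := by
  have hd := deriv_of_eqOn_Ioo (q := t + 1) (fun u hu => alphaEps_of_gt hδ hu.1)
    (fun t => hasDerivAt_const t _) (fun t => hasDerivAt_const t 0)
    (fun t => (hasDerivAt_id t).const_sub _) (fun t => hasDerivAt_const t (-1))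
    (fun t => hasDerivAt_const t _) (fun t => hasDerivAt_const t 0) ⟨ht, by linarith⟩
  rw [hd.1, hd.2]
  constructor
  · refine (norm_vec3_le _ _ _).trans ?_
    norm_num
  · refine (norm_vec3_le _ _ _).trans ?_
    norm_num

lemma deriv_sub_bound_semicircle {b : ℕ} {ε t : ℝ} (hε : 0 < ε)
    (hδ : ((b : ℝ) + 1) * ε < 1 / 8) (ht : ((b : ℝ) + 1) * ε / 2 < t)
    (ht' : t < 1 / 4 - ((b : ℝ) + 1) * ε / 2) :
    ‖deriv (alphaEps b ε) t - deriv alphaTwo t‖ ≤ 2000 * ((b : ℝ) + 1) * ε ∧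
      ‖deriv (deriv (alphaEps b ε)) t - deriv (deriv alphaTwo) t‖ ≤
        2000 * ((b : ℝ) + 1) * ε := by
  have hδ0 : 0 < ((b : ℝ) + 1) * ε := by positivity
  have hf := fun u (hu : u ∈ Ioo (((b : ℝ) + 1) * ε / 2) (1 / 4 - ((b : ℝ) + 1) * ε / 2)) =>
    alphaEps_of_mid hu.1 hu.2.le
  obtain ⟨hr, hθ, -⟩ := radius_angle_bounds (t := t) hδ0 hδ (by linarith) (by linarith)
  rw [mul_assoc 2000]
  generalize ((b : ℝ) + 1) * ε = δ at *
  have hr0 : (1 / 4 - δ) / π ≠ 0 := by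
    have : 0 < 1 / 4 - δ := by linarith
    positivity
  generalize (1 / 4 - δ) / π = r at *
  have hang : ∀ u, HasDerivAt (fun u => (u - δ / 2) / r) (1 / r) u :=
    fun u => ((hasDerivAt_id u).sub_const (δ / 2)).div_const r
  have hd := deriv_of_eqOn_Ioo (f' := fun u => sin ((u - δ / 2) / r))
    (f'' := fun u => 1 / r * cos ((u - δ / 2) / r))
    (g' := fun u => cos ((u - δ / 2) / r))
    (g'' := fun u => -(1 / r * sin ((u - δ / 2) / r))) hf
    (fun u => by
      refine (((hang u).cos.const_mul r).const_sub (ε ^ 2 + r)).congr_deriv ?_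
      field_simp)
    (fun u => by
      refine (hang u).sin.congr_deriv ?_
      ring)
    (fun u => by
      refine (((hang u).sin.const_mul r).const_add (δ / 2)).congr_deriv ?_
      field_simp)
    (fun u => by
      refine (hang u).cos.congr_deriv ?_
      ring)
    (fun u => hasDerivAt_const u 0) (fun u => hasDerivAt_const u 0) ⟨ht, ht'⟩
  have hπ := Real.pi_pos
  have hπ4 := Real.pi_le_four
  have h4π : |4 * π| ≤ 16 := by
    rw [abs_of_pos (by positivity)]
    linarith
  rw [hd.1, hd.2, (deriv_alphaTwo t).1, (deriv_alphaTwo t).2, vec3_sub, vec3_sub]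
  constructor
  · refine (norm_vec3_le _ _ _).trans ?_
    have h1 := abs_sin_sub_sin_le ((t - δ / 2) / r) (4 * π * t)
    have h2 := abs_cos_sub_cos_le ((t - δ / 2) / r) (4 * π * t)
    rw [sub_zero, abs_zero]
    linarith
  · refine (norm_vec3_le _ _ _).trans ?_
    have h1 := abs_mul_cos_sub_le (1 / r) (4 * π) ((t - δ / 2) / r) (4 * π * t)
    have h2 := abs_mul_sin_sub_le (1 / r) (4 * π) ((t - δ / 2) / r) (4 * π * t)
    have e : -(1 / r * sin ((t - δ / 2) / r)) - -(4 * π) * sin (4 * π * t) =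
        -(1 / r * sin ((t - δ / 2) / r) - 4 * π * sin (4 * π * t)) := by ring
    have h3 : |4 * π| * |(t - δ / 2) / r - 4 * π * t| ≤ 16 * (48 * δ) := by gcongr
    rw [e, abs_neg, sub_zero, abs_zero]
    linarith

lemma sub_bound {b : ℕ} {ε t : ℝ} (hε : 0 < ε) (hε1 : ε ≤ 1)
    (hδ : ((b : ℝ) + 1) * ε < 1 / 8) (ht0 : 0 ≤ t) (ht1 : t ≤ 1 / 4) :
    ‖alphaEps b ε t - alphaTwo t‖ ≤ 2000 * ((b : ℝ) + 1) * ε := by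
  have hδ0 : 0 < ((b : ℝ) + 1) * ε := by positivity
  have hεδ : ε ≤ ((b : ℝ) + 1) * ε := by
    have : (0 : ℝ) ≤ b := Nat.cast_nonneg b
    nlinarith
  have hε2 : ε ^ 2 ≤ ε := by nlinarith
  have hε20 := sq_nonneg ε
  have hε2' : |ε ^ 2| = ε ^ 2 := abs_of_pos (by positivity)
  obtain ⟨hr, hθ, hR⟩ := radius_angle_bounds (t := t) hδ0 hδ ht0 ht1
  have hπ := Real.pi_pos
  have hπ4 := Real.pi_le_four
  have hπ3 := Real.pi_gt_three
  have hinv0 : 0 < 1 / (4 * π) := by positivity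
  have hinv : 1 / (4 * π) ≤ 1 := by
    rw [div_le_one (by positivity)]
    linarith
  have hinv' : |1 / (4 * π)| = 1 / (4 * π) := abs_of_pos hinv0
  have key : ∀ z c : ℝ, |z| ≤ c → |1 / (4 * π) * z| ≤ c := fun z c hz => by
    rw [abs_mul, hinv']
    nlinarith [abs_nonneg z]
  rw [alphaTwo_eq, mul_assoc 2000]
  have hr0 : (0 : ℝ) < (1 / 4 - ((b : ℝ) + 1) * ε) / π := by
    have : 0 < 1 / 4 - ((b : ℝ) + 1) * ε := by linarith
    positivity
  rcases le_or_gt t (((b : ℝ) + 1) * ε / 2) with h1 | h1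
  · rw [alphaEps_of_le h1, hel, vec3_sub]
    refine (norm_vec3_le _ _ _).trans ?_
    have hc := abs_cos_sub_cos_le 0 (4 * π * t)
    have hs := abs_sin_sub_sin_le (4 * π * t) 0
    rw [cos_zero, zero_sub, abs_neg] at hc
    rw [sin_zero, sub_zero, sub_zero] at hs
    have h4 : |4 * π * t| ≤ 8 * (((b : ℝ) + 1) * ε) := by
      rw [abs_of_nonneg (by positivity)]
      nlinarith
    have k1 := key _ _ (hc.trans h4)
    have k2 := key _ _ (hs.trans h4)
    have j1 := abs_sub (ε ^ 2 * (-1 : ℝ) ^ ((b - 1) / 2) * sin (π * phi b (t / ε)))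
      (1 / (4 * π) * (1 - cos (4 * π * t)))
    have j2 := abs_sub t (1 / (4 * π) * sin (4 * π * t))
    have m1 : |ε ^ 2 * (-1 : ℝ) ^ ((b - 1) / 2) * sin (π * phi b (t / ε))| ≤ ε ^ 2 := by
      rw [abs_mul, abs_mul, hε2', abs_neg_one_pow, mul_one]
      exact mul_le_of_le_one_right (by positivity) (abs_sin_le_one _)
    have m3 : |ε ^ 2 * cos (π * phi b (t / ε)) - 0| ≤ ε ^ 2 := by
      rw [sub_zero, abs_mul, hε2']
      exact mul_le_of_le_one_right (by positivity) (abs_cos_le_one _)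
    rw [abs_of_nonneg ht0] at j2
    linarith
  rcases le_or_gt t (1 / 4 - ((b : ℝ) + 1) * ε / 2) with h2 | h2
  · rw [alphaEps_of_mid h1 h2, vec3_sub]
    refine (norm_vec3_le _ _ _).trans ?_
    generalize ((b : ℝ) + 1) * ε = δ at *
    generalize (1 / 4 - δ) / π = r at *
    have a1 := abs_mul_cos_sub_le r (1 / (4 * π)) ((t - δ / 2) / r) (4 * π * t)
    have a2 := abs_mul_sin_sub_le r (1 / (4 * π)) ((t - δ / 2) / r) (4 * π * t)
    have a3 : |1 / (4 * π)| * |(t - δ / 2) / r - 4 * π * t| ≤ 1 * (48 * δ) := by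
      rw [hinv']
      gcongr
    rw [abs_le] at hR
    have b1 := abs_le.1 (a1.trans (add_le_add (abs_le.2 hR) a3))
    have b2 := abs_le.1 (a2.trans (add_le_add (abs_le.2 hR) a3))
    have c1 : |ε ^ 2 + r - r * cos ((t - δ / 2) / r) -
        1 / (4 * π) * (1 - cos (4 * π * t))| ≤ 100 * δ :=
      abs_le.2 ⟨by linarith [b1.1, b1.2, hR.1, hR.2], by linarith [b1.1, b1.2, hR.1, hR.2]⟩
    have c2 : |δ / 2 + r * sin ((t - δ / 2) / r) - 1 / (4 * π) * sin (4 * π * t)| ≤ 100 * δ :=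
      abs_le.2 ⟨by linarith [b2.1, b2.2], by linarith [b2.1, b2.2]⟩
    rw [sub_zero, abs_zero]
    linarith
  · rw [alphaEps_of_gt hδ h2, vec3_sub]
    refine (norm_vec3_le _ _ _).trans ?_
    -- The angle `4πt` is within `O(ε)` of `π`.
    have hc := abs_cos_sub_cos_le (4 * π * t) π
    have hs := abs_sin_sub_sin_le (4 * π * t) π
    rw [cos_pi] at hc
    rw [sin_pi, sub_zero] at hs
    have h4 : |4 * π * t - π| ≤ 8 * (((b : ℝ) + 1) * ε) := by
      rw [abs_le]
      constructor <;> nlinarith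
    have k1 := abs_le.1 (key _ _ (hc.trans h4))
    have k2 := abs_le.1 (key _ _ (hs.trans h4))
    generalize ((b : ℝ) + 1) * ε = δ at *
    generalize (1 / 4 - δ) / π = r at *
    rw [abs_le] at hR
    have c1 : |ε ^ 2 + 2 * r - 1 / (4 * π) * (1 - cos (4 * π * t))| ≤ 100 * δ :=
      abs_le.2 ⟨by linarith [k1.1, k1.2, hR.1, hR.2], by linarith [k1.1, k1.2, hR.1, hR.2]⟩
    have c2 : |1 / 4 - t - 1 / (4 * π) * sin (4 * π * t)| ≤ 100 * δ :=
      abs_le.2 ⟨by linarith [k2.1, k2.2], by linarith [k2.1, k2.2]⟩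
    rw [sub_zero, abs_zero]
    linarith

/-! ### The integral estimate -/

open MeasureTheory in
/-- A function that is `O(ε)` off two end intervals of length `a = O(ε)`, and bounded on
these, has `L²`-norm `O(√ε)`. Finitely many exceptional points are allowed. -/
lemma sqrt_integral_le {F : ℝ → E3} {K C ε a : ℝ} {S : Set ℝ} (hS : S.Finite) (hε : 0 < ε)
    (hε1 : ε ≤ 1) (ha : 0 < a) (hC : 0 ≤ C)
    (hK : K ^ 2 * (2 * a + ε / 4) ≤ C ^ 2 * ε)
    (h1 : ∀ t ∈ Ioc (0 : ℝ) (1 / 4), t ∉ S → t < a ∨ 1 / 4 - a < t → ‖F t‖ ≤ K)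
    (h2 : ∀ t ∈ Ioc (0 : ℝ) (1 / 4), t ∉ S → a < t → t < 1 / 4 - a → ‖F t‖ ≤ K * ε) :
    √(∫ t in (0 : ℝ)..(1 / 4), ‖F t‖ ^ 2) ≤ C * √ε := by
  set T : Set ℝ := Ioc 0 a ∪ Ioc (1 / 4 - a) (1 / 4) with hT
  have hTm : MeasurableSet T := measurableSet_Ioc.union measurableSet_Ioc
  have hTv : volume.real T ≤ 2 * a := by
    refine (measureReal_union_le _ _).trans ?_
    rw [Real.volume_real_Ioc_of_le ha.le, Real.volume_real_Ioc_of_le (by linarith)]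
    linarith
  have hTf : volume T ≠ ⊤ := by
    refine ((measure_union_le _ _).trans_lt ?_).ne
    simp [Real.volume_Ioc]
  have hi : Integrable (T.indicator fun _ : ℝ => K ^ 2) :=
    (integrable_indicator_iff hTm).2 (integrableOn_const hTf)
  have hi' : IntegrableOn (fun _ : ℝ => K ^ 2 * ε) (Ioc (0 : ℝ) (1 / 4)) :=
    integrableOn_const (by simp [Real.volume_Ioc])
  have hae : ∀ᵐ t ∂(volume.restrict (Ioc (0 : ℝ) (1 / 4))),
      ‖F t‖ ^ 2 ≤ T.indicator (fun _ => K ^ 2) t + K ^ 2 * ε := by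
    have hn : ∀ᵐ t ∂(volume.restrict (Ioc (0 : ℝ) (1 / 4))), t ∉ S ∪ {a, 1 / 4 - a} :=
      ae_restrict_of_ae
        ((hS.union (Set.toFinite {a, 1 / 4 - a})).measure_zero volume 
          |> measure_eq_zero_iff_ae_notMem.1)
    filter_upwards [hn, ae_restrict_mem measurableSet_Ioc] with t ht htI
    simp only [mem_union, mem_insert_iff, mem_singleton_iff, not_or] at ht
    obtain ⟨htS, hta, hta'⟩ := ht
    have hp : 0 ≤ K ^ 2 * ε := by positivity
    by_cases hout : t < a ∨ 1 / 4 - a < t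
    · have htT : t ∈ T := hout.imp (fun h => ⟨htI.1, h.le⟩) (fun h => ⟨h, htI.2⟩)
      rw [indicator_of_mem htT]
      have := pow_le_pow_left₀ (norm_nonneg _) (h1 t htI htS hout) 2
      linarith
    · rw [not_or, not_lt, not_lt] at hout
      have := pow_le_pow_left₀ (norm_nonneg _) (h2 t htI htS (lt_of_le_of_ne hout.1 (Ne.symm hta))
        (lt_of_le_of_ne hout.2 hta')) 2
      have h0 : 0 ≤ T.indicator (fun _ => K ^ 2) t :=
        indicator_nonneg (fun _ _ => sq_nonneg K) t
      have : (K * ε) ^ 2 ≤ K ^ 2 * ε := by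
        rw [mul_pow]
        exact mul_le_mul_of_nonneg_left (by nlinarith) (sq_nonneg K)
      linarith
  have hint : ∫ t in (0 : ℝ)..(1 / 4), ‖F t‖ ^ 2 ≤ C ^ 2 * ε := by
    rw [intervalIntegral.integral_of_le (by norm_num)]
    calc ∫ t in Ioc (0 : ℝ) (1 / 4), ‖F t‖ ^ 2
        ≤ ∫ t in Ioc (0 : ℝ) (1 / 4), (T.indicator (fun _ => K ^ 2) t + K ^ 2 * ε) :=
          integral_mono_of_nonneg (Filter.Eventually.of_forall fun _ => by positivity)
            (Integrable.add hi.integrableOn hi') hae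
      _ = (∫ t in Ioc (0 : ℝ) (1 / 4), T.indicator (fun _ => K ^ 2) t) + K ^ 2 * ε / 4 := by
          rw [integral_add hi.integrableOn hi']
          simp
          ring
      _ ≤ (∫ t, T.indicator (fun _ => K ^ 2) t) + K ^ 2 * ε / 4 := by
          have := setIntegral_le_integral (s := Ioc (0 : ℝ) (1 / 4)) hi
            (Filter.Eventually.of_forall (indicator_nonneg fun _ _ => sq_nonneg K))
          linarith
      _ = volume.real T * K ^ 2 + K ^ 2 * ε / 4 := by
          rw [integral_indicator_const _ hTm, smul_eq_mul]
      _ ≤ 2 * a * K ^ 2 + K ^ 2 * ε / 4 := by gcongr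
      _ ≤ C ^ 2 * ε := by linarith
  calc √(∫ t in (0 : ℝ)..(1 / 4), ‖F t‖ ^ 2) ≤ √(C ^ 2 * ε) := Real.sqrt_le_sqrt hint
    _ = C * √ε := by rw [Real.sqrt_mul (sq_nonneg C), Real.sqrt_sq hC]

/-- **Strong `W^{2,2}`-convergence of the generating arcs.** For odd
`b ≥ 3` there is a constant `C ≥ 1`, independent of `ε`, such that for all
`ε ∈ (0, 1/(8(b+1)))` the arc `α^ε` is `C√ε`-close to `α₂` in the `L²`-norms of the
second and first derivatives and in the sup-norm on `[0, 1/4]`; in particular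
`α^ε → α₂` in `W^{2,2}` as `ε → 0`. -/
theorem generating_arcs_W22_convergence (b : ℕ) (hb : Odd b) (hb3 : 3 ≤ b) :
    ∃ C : ℝ, 1 ≤ C ∧
      ∀ ε : ℝ, 0 < ε → ε < 1 / (8 * ((b : ℝ) + 1)) →
        Real.sqrt (∫ t in (0 : ℝ)..(1 / 4),
            ‖deriv (deriv (alphaEps b ε)) t - deriv (deriv alphaTwo) t‖ ^ 2) ≤
          C * Real.sqrt ε ∧
        Real.sqrt (∫ t in (0 : ℝ)..(1 / 4),
            ‖deriv (alphaEps b ε) t - deriv alphaTwo t‖ ^ 2) ≤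
          C * Real.sqrt ε ∧
        ∀ t ∈ Icc (0 : ℝ) (1 / 4), ‖alphaEps b ε t - alphaTwo t‖ ≤ C * Real.sqrt ε := by
  have hb0 : (3 : ℝ) ≤ b := by exact_mod_cast hb3
  obtain ⟨K, hKdef⟩ : ∃ K : ℝ, K = 2000 * ((b : ℝ) + 1) := ⟨_, rfl⟩
  have hK : 8000 ≤ K := by linarith
  refine ⟨K * ((b : ℝ) + 2), by nlinarith, fun ε hε hεb => ?_⟩
  have hδ : ((b : ℝ) + 1) * ε < 1 / 8 := by
    rw [lt_div_iff₀ (by positivity)] at hεb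
    linarith
  have hε1 : ε ≤ 1 := by nlinarith
  have hconst : K ^ 2 * (2 * (((b : ℝ) + 1) * ε / 2) + ε / 4) ≤ (K * ((b : ℝ) + 2)) ^ 2 * ε := by
    rw [mul_pow, mul_assoc (K ^ 2)]
    refine mul_le_mul_of_nonneg_left ?_ (sq_nonneg K)
    have h : (b : ℝ) + 1 + 1 / 4 ≤ ((b : ℝ) + 2) ^ 2 := by nlinarith
    linarith [mul_le_mul_of_nonneg_right h hε.le]
  have hbd : ∀ t, t ∉ ({((b : ℝ) - 1) * ε / 2} : Set ℝ) →
      t < ((b : ℝ) + 1) * ε / 2 ∨ 1 / 4 - ((b : ℝ) + 1) * ε / 2 < t →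
      ‖deriv (alphaEps b ε) t‖ ≤ 9 ∧ ‖deriv (deriv (alphaEps b ε)) t‖ ≤ 40 := by
    rintro t hne (h | h)
    · exact deriv_bound_helix hε hε1 h hne
    · exact deriv_bound_segment hδ h
  have hfin := Set.finite_singleton (((b : ℝ) - 1) * ε / 2)
  refine ⟨?_, ?_, ?_⟩
  · refine sqrt_integral_le hfin hε hε1 (by positivity) (by positivity) hconst ?_ ?_
    · intro t _ hne h
      have := norm_sub_le (deriv (deriv (alphaEps b ε)) t) (deriv (deriv alphaTwo) t)
      linarith [(hbd t hne h).2, (norm_deriv_alphaTwo_le t).2]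
    · intro t _ _ h h'
      rw [hKdef]
      exact (deriv_sub_bound_semicircle hε hδ h h').2
  · refine sqrt_integral_le hfin hε hε1 (by positivity) (by positivity) hconst ?_ ?_
    · intro t _ hne h
      have := norm_sub_le (deriv (alphaEps b ε) t) (deriv alphaTwo t)
      linarith [(hbd t hne h).1, (norm_deriv_alphaTwo_le t).1]
    · intro t _ _ h h'
      rw [hKdef]
      exact (deriv_sub_bound_semicircle hε hδ h h').1
  · intro t ht
    refine (sub_bound hε hε1 hδ ht.1 ht.2).trans ?_
    rw [← hKdef]
    have hsq : ε ≤ √ε := Real.le_sqrt_of_sq_le (by nlinarith)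
    calc K * ε ≤ K * √ε := by gcongr
      _ ≤ K * ((b : ℝ) + 2) * √ε := by
        gcongr
        nlinarith
end
end
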